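/- arXiv:2006.00355 — 2 statements merged into one kernel-verified Lean document; each statement's English description precedes it below -/
import Mathlib

section
/- Let p be an odd prime, n ≥ 4 an integer, and t an integer with 1 ≤ t < n; set d = gcd(t, n) and assume n ≥ 3d, that n/d is odd, and that the equation a^{p^t+1} + 1 = 0 has a root a ∈ F_{p^n}. Let c ∈ F_{p^n} with c ≠ 1, and let G : F_{p^n} → F_{p^n} be given by G(x) = x^{p^n−2} + x^{p^t}. Then the c-differential uniformity of G satisfies 4 ≤ δ_{G,c} ≤ p^t + 4. -/
open Finset

/-- The `(c,a,b)` entry of the `c`-Difference Distribution Table of `G`: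
the number of `x` with `G (x + a) - c * G x = b`. -/
def cddt {F : Type*} [Field F] [Fintype F] [DecidableEq F]
    (G : F → F) (c a b : F) : ℕ :=
  (Finset.univ.filter fun x : F => G (x + a) - c * G x = b).card

/-- The `c`-differential uniformity of `G`: the maximum entry of the `c`-DDT,
where `a ≠ 0` is required only when `c = 1`. -/
def cdu {F : Type*} [Field F] [Fintype F] [DecidableEq F]
    (G : F → F) (c : F) : ℕ :=
  ((Finset.univ : Finset (F × F)).filter fun p => c = 1 → p.1 ≠ 0).sup
    fun p => cddt G c p.1 p.2

open Polynomial in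
/-- Upper bound: each entry of the table is at most `q + 4`. -/
lemma cddt_upper {F : Type*} [Field F] [Fintype F] [DecidableEq F]
    (q : ℕ) (hq : 1 ≤ q) (c : F) (hc : c ≠ 1) (G : F → F)
    (hG : ∀ x : F, x ≠ 0 → G x = x⁻¹ + x ^ q) (a b : F) :
    cddt G c a b ≤ q + 4 := by
  classical
  set R : F[X] := X * (X + C a) * ((X + C a) ^ q - C c * X ^ q) + (X - C c * (X + C a)
    - C b * X * (X + C a)) with hR
  have hXa : (X + C a : F[X]).Monic := monic_X_add_C a
  have hd1 : (X + C a : F[X]).natDegree = 1 := natDegree_X_add_C a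
  have hdeg : R.natDegree ≤ q + 2 := by
    have e1 : ((X + C a : F[X]) ^ q).natDegree ≤ q := by
      simpa [hd1] using natDegree_pow_le (p := (X + C a : F[X])) (n := q)
    have e2 : (C c * X ^ q : F[X]).natDegree ≤ q := natDegree_C_mul_X_pow_le c q
    have e3 : ((X + C a : F[X]) ^ q - C c * X ^ q).natDegree ≤ q :=
      (natDegree_sub_le_of_le e1 e2).trans (by simp)
    have e4 : (X * (X + C a) : F[X]).natDegree ≤ 2 := by compute_degree
    have e5 : (X - C c * (X + C a) - C b * X * (X + C a) : F[X]).natDegree ≤ 2 := by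
      compute_degree
    refine natDegree_add_le_of_degree_le ?_ (e5.trans (by omega))
    refine (natDegree_mul_le_of_le e4 e3).trans (by omega)
  have hcoef : R.coeff (q + 2) = 1 - c := by
    have e5 : (X - C c * (X + C a) - C b * X * (X + C a) : F[X]).natDegree ≤ 2 := by
      compute_degree
    have e6 : (X - C c * (X + C a) - C b * X * (X + C a) : F[X]).coeff (q + 2) = 0 :=
      coeff_eq_zero_of_natDegree_lt (by omega)
    have e7 : (X * (X + C a) * (X + C a) ^ q : F[X]).coeff (q + 2) = 1 := by
      have hm : (X * (X + C a) * (X + C a) ^ q : F[X]).Monic :=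
        (monic_X.mul hXa).mul (hXa.pow q)
      have hn : (X * (X + C a) * (X + C a) ^ q : F[X]).natDegree = q + 2 := by
        rw [(monic_X.mul hXa).natDegree_mul (hXa.pow q), monic_X.natDegree_mul hXa,
          hXa.natDegree_pow, hd1, natDegree_X]
        omega
      rw [← hn]; exact hm
    have e8 : (X * (X + C a) * X ^ q : F[X]).coeff (q + 2) = 1 := by
      have hm : (X * (X + C a) * X ^ q : F[X]).Monic :=
        (monic_X.mul hXa).mul (monic_X.pow q)
      have hn : (X * (X + C a) * X ^ q : F[X]).natDegree = q + 2 := by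
        rw [(monic_X.mul hXa).natDegree_mul (monic_X.pow q), monic_X.natDegree_mul hXa,
          monic_X.natDegree_pow, hd1, natDegree_X]
        omega
      rw [← hn]; exact hm
    have e9 : R = X * (X + C a) * (X + C a) ^ q - C c * (X * (X + C a) * X ^ q)
      + (X - C c * (X + C a) - C b * X * (X + C a)) := by rw [hR]; ring
    rw [e9, coeff_add, coeff_sub, coeff_C_mul, e6, e7, e8]; ring
  have hR0 : R ≠ 0 := by
    intro h
    rw [h, coeff_zero] at hcoef
    exact hc (sub_eq_zero.mp hcoef.symm).symm
  have hsub : (Finset.univ.filter fun x : F => G (x + a) - c * G x = b) ⊆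
      R.roots.toFinset ∪ {0, -a} := by
    intro x hx
    simp only [Finset.mem_filter, Finset.mem_univ, true_and] at hx
    simp only [Finset.mem_union, Multiset.mem_toFinset, Finset.mem_insert, Finset.mem_singleton]
    by_cases h0 : x = 0
    · exact Or.inr (Or.inl h0)
    by_cases h1 : x = -a
    · exact Or.inr (Or.inr h1)
    have h2 : x + a ≠ 0 := fun h => h1 (eq_neg_of_add_eq_zero_left h)
    left
    rw [mem_roots hR0, IsRoot.def, hR]
    rw [hG _ h0, hG _ h2] at hx
    simp only [eval_add, eval_mul, eval_sub, eval_X, eval_C, eval_pow]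
    rw [← hx]
    field_simp
    ring
  unfold cddt
  refine (Finset.card_le_card hsub).trans ((Finset.card_union_le _ _).trans ?_)
  have h1 : R.roots.toFinset.card ≤ q + 2 :=
    (Multiset.toFinset_card_le _).trans ((card_roots' R).trans hdeg)
  have h2 : ({0, -a} : Finset F).card ≤ 2 := Finset.card_le_two
  omega

open Polynomial in
lemma exists_not_fixed {F : Type*} [Field F] [Fintype F] (q : ℕ) (hq : 1 < q)
    (h : q < Fintype.card F) : ∃ v : F, v ^ q ≠ v := by
  classical
  by_contra! hall
  have hne : (X ^ q - X : F[X]) ≠ 0 := FiniteField.X_pow_card_sub_X_ne_zero F hq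
  have hdeg : (X ^ q - X : F[X]).natDegree = q := FiniteField.X_pow_card_sub_X_natDegree_eq F hq
  have := Polynomial.card_le_degree_of_subset_roots (p := (X ^ q - X : F[X]))
    (Z := (Finset.univ : Finset F)) (by
      intro x _
      rw [mem_roots hne, IsRoot.def]
      simp [hall x])
  rw [hdeg, Finset.card_univ] at this
  omega

lemma key_identity {F : Type*} [Field F] (y y1 y2 D D1 B s s1 : F) (hy : y ≠ 0) (hy1 : y1 ≠ 0)
    (hs : s ≠ 0) (hs1 : s1 ≠ 0) (hD : D ≠ 0) (h1 : s1 * s * D = D1)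
    (h2 : y2 * D + y * D1 = B * y1) :
    (y1 / (y * s))⁻¹ + y2 / (y1 * s1) = B / D / s1 := by
  subst h1
  field_simp
  linear_combination h2

theorem cdu_inverse_plus_monomial_odd_char_odd_case
    {F : Type*} [Field F] [Fintype F] [DecidableEq F]
    (p n t : ℕ) (hp : p.Prime) (hodd : Odd p)
    (hn : 4 ≤ n) (ht1 : 1 ≤ t) (htn : t < n)
    (h3d : 3 * Nat.gcd t n ≤ n) (hoddq : Odd (n / Nat.gcd t n))
    (hroot : ∃ a : F, a ^ (p ^ t + 1) + 1 = 0)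
    (hF : Fintype.card F = p ^ n)
    (c : F) (hc : c ≠ 1)
    (G : F → F) (hG : ∀ x : F, G x = x ^ (p ^ n - 2) + x ^ p ^ t) :
    4 ≤ cdu G c ∧ cdu G c ≤ p ^ t + 4 := by
  haveI : Fact p.Prime := ⟨hp⟩
  haveI : CharP F p := charP_of_card_eq_prime_pow hF
  have hG' : ∀ x : F, x ≠ 0 → G x = x⁻¹ + x ^ p ^ t := by
    intro x hx
    rw [hG]
    congr 1
    apply eq_inv_of_mul_eq_one_left
    have h2 : 2 ≤ p ^ n := hp.two_le.trans (Nat.le_self_pow (by omega) p)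
    rw [← pow_succ, show p ^ n - 2 + 1 = Fintype.card F - 1 by omega]
    exact FiniteField.pow_card_sub_one_eq_one x hx
  refine ⟨?_, ?_⟩
  · -- lower bound
    have h2F : (2 : F) ≠ 0 := by
      intro h
      have : (p : ℕ) ∣ 2 := (CharP.cast_eq_zero_iff F p 2).mp (by exact_mod_cast h)
      have h3 := Nat.le_of_dvd (by norm_num) this
      have h4 := hp.two_le
      have : p = 2 := by omega
      subst this
      revert hodd; decide
    have hqodd : Odd (p ^ t) := hodd.pow
    have hq1 : 1 < p ^ t := Nat.one_lt_pow (by omega) hp.one_lt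
    have hqF : p ^ t < Fintype.card F := hF ▸ Nat.pow_lt_pow_right hp.one_lt htn
    obtain ⟨v, hv⟩ := exists_not_fixed (F := F) (p ^ t) hq1 hqF
    have hsub : ∀ x y : F, (x - y) ^ p ^ t = x ^ p ^ t - y ^ p ^ t := fun x y => sub_pow_char_pow x y t
    have hadd : ∀ x y : F, (x + y) ^ p ^ t = x ^ p ^ t + y ^ p ^ t := fun x y => add_pow_char_pow x y p t
    set q := p ^ t with hqdef
    set w := v ^ q with hw
    set D := w - v with hDdef
    have hD : D ≠ 0 := sub_ne_zero.mpr hv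
    -- the root `s`
    obtain ⟨s, hs⟩ : ∃ s : F, s ^ (q + 1) = D ^ (q - 1) := by
      obtain ⟨j, hj⟩ := hqodd
      have hdiv : q + 1 ∣ q ^ (n / Nat.gcd t n) + 1 := by
        simpa using hoddq.nat_add_dvd_pow_add_pow q 1
      obtain ⟨k, hk⟩ := hdiv
      refine ⟨(D ^ j) ^ k, ?_⟩
      have hfix : (D ^ j) ^ (q ^ (n / Nat.gcd t n)) = D ^ j := by
        have : q ^ (n / Nat.gcd t n) = Fintype.card F ^ (t / Nat.gcd t n) := by
          rw [hF, hqdef, ← pow_mul, ← pow_mul]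
          congr 1
          rw [← Nat.mul_div_assoc _ (Nat.gcd_dvd_right t n),
            ← Nat.mul_div_assoc _ (Nat.gcd_dvd_left t n), mul_comm]
        rw [this]
        exact FiniteField.pow_card_pow _ _
      rw [← pow_mul (D ^ j) k, mul_comm k, ← hk, pow_succ, hfix, ← pow_add]
      congr 1
      omega
    have hs0 : s ≠ 0 := by
      rintro rfl
      rw [zero_pow (by omega)] at hs
      exact pow_ne_zero _ hD hs.symm
    have hsD : s ^ q * s * D = D ^ q := by
      rw [← pow_succ, hs, ← pow_succ]
      congr 1
      omega
    set B := w ^ q - v with hB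
    have hDq : D ^ q = w ^ q - w := by rw [hDdef, hsub]
    let z : F → F := fun y => y ^ q / (y * s)
    have hz : ∀ y : F, y ≠ 0 → (y ^ q) ^ q * D + y * D ^ q = B * y ^ q →
        G (z y) = B / D / s ^ q := by
      intro y hy h
      have hyq : y ^ q ≠ 0 := pow_ne_zero _ hy
      have hzy : z y ≠ 0 := div_ne_zero hyq (mul_ne_zero hy hs0)
      rw [hG' _ hzy]
      have : z y ^ q = (y ^ q) ^ q / (y ^ q * s ^ q) := by
        simp only [z]; rw [div_pow, mul_pow]
      rw [this]
      exact key_identity y (y ^ q) ((y ^ q) ^ q) D (D ^ q) B s (s ^ q) hy hyq hs0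
        (pow_ne_zero _ hs0) hD hsD h
    have hzinj : ∀ y y' : F, y ≠ 0 → y' ≠ 0 → y ^ q * y' ≠ y' ^ q * y → z y ≠ z y' := by
      intro y y' hy hy' hne h
      apply hne
      simp only [z] at h
      rw [div_eq_div_iff (mul_ne_zero hy hs0) (mul_ne_zero hy' hs0)] at h
      apply mul_right_cancel₀ hs0
      linear_combination h
    have hq0 : q ≠ 0 := by omega
    have hv0 : v ≠ 0 := by
      rintro h; apply hv; rw [hw, h, zero_pow hq0]
    have hvp : v + 1 ≠ 0 := by
      intro h
      have h1 := hadd v 1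
      rw [h, zero_pow hq0, one_pow] at h1
      apply hv
      linear_combination -h - h1
    have hvm : v - 1 ≠ 0 := by
      intro h
      have h1 := hsub v 1
      rw [h, zero_pow hq0, one_pow] at h1
      apply hv
      linear_combination -h - h1
    have ep : (v + 1) ^ q = w + 1 := by rw [hadd, one_pow]
    have em : (v - 1) ^ q = w - 1 := by rw [hsub, one_pow]
    have epp : (w + 1) ^ q = w ^ q + 1 := by rw [hadd, one_pow]
    have emm : (w - 1) ^ q = w ^ q - 1 := by rw [hsub, one_pow]
    have g1 := hz 1 one_ne_zero (by rw [one_pow, one_pow, hDq]; ring)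
    have g2 := hz v hv0 (by rw [hDq]; ring)
    have g3 := hz (v + 1) hvp (by rw [ep, epp, hDq]; ring)
    have g4 := hz (v - 1) hvm (by rw [em, emm, hDq]; ring)
    have hne : w - v ≠ 0 := hD
    have n12 : z 1 ≠ z v := hzinj _ _ one_ne_zero hv0 (by
      rw [one_pow]; intro h; apply hne; linear_combination -h)
    have n13 : z 1 ≠ z (v + 1) := hzinj _ _ one_ne_zero hvp (by
      rw [one_pow, ep]; intro h; apply hne; linear_combination -h)
    have n14 : z 1 ≠ z (v - 1) := hzinj _ _ one_ne_zero hvm (by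
      rw [one_pow, em]; intro h; apply hne; linear_combination -h)
    have n23 : z v ≠ z (v + 1) := hzinj _ _ hv0 hvp (by
      rw [ep]; intro h; apply hne; linear_combination h)
    have n24 : z v ≠ z (v - 1) := hzinj _ _ hv0 hvm (by
      rw [em]; intro h; apply hne; linear_combination -h)
    have n34 : z (v + 1) ≠ z (v - 1) := hzinj _ _ hvp hvm (by
      rw [ep, em]; intro h; apply mul_ne_zero h2F hne; linear_combination -h)
    set b := B / D / s ^ q
    have hcd : 4 ≤ cddt G c 0 ((1 - c) * b) := by
      have hcard : ({z 1, z v, z (v + 1), z (v - 1)} : Finset F).card = 4 := by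
        rw [Finset.card_insert_of_notMem (by simp [n12, n13, n14]),
          Finset.card_insert_of_notMem (by simp [n23, n24]),
          Finset.card_insert_of_notMem (by simp [n34]), Finset.card_singleton]
      rw [← hcard]
      apply Finset.card_le_card
      intro x hx
      have hGx : G x = b := by
        simp only [Finset.mem_insert, Finset.mem_singleton] at hx
        rcases hx with rfl | rfl | rfl | rfl <;> assumption
      simp only [Finset.mem_filter, Finset.mem_univ, true_and, add_zero, hGx]
      ring
    refine hcd.trans ?_
    exact Finset.le_sup (f := fun r : F × F => cddt G c r.1 r.2)
      (b := ((0 : F), (1 - c) * b)) (by simp [hc])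
  · exact Finset.sup_le fun r _ =>
      cddt_upper (p ^ t) (Nat.one_le_pow _ _ hp.pos) c hc G hG' r.1 r.2
end

section
/- Let n ≥ 5 be an odd integer and suppose there exists a ∈ F_{2^n} with a ∉ {0, 1}, a^3 + a^2 + 1 ≠ 0, Tr(a^2/(a^2+a+1)) = 0 and Tr(a^4/(a+1)^5) = 0. Let G : F_{2^n} → F_{2^n} be given by G(x) = x^{2^n−2} + x^2. Then there exists c ∈ F_{2^n} with c ≠ 1 (for example c = 1 + s^{−1}, where s is the unique element of F_{2^n} with s^2 = a^3 + a^2 + 1) such that the c-differential uniformity of G satisfies δ_{G,c} = 5. -/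
open Finset

/-- The absolute trace of F_{2^n}, Tr x = x + x^2 + x^4 + ... + x^(2^(n-1)),
viewed as an element of the field (its values lie in the prime subfield). -/
def Tr {F : Type*} [Field F] (n : ℕ) (x : F) : F :=
  ∑ i ∈ Finset.range n, x ^ 2 ^ i


section helpers

variable {F : Type*} [Field F]

theorem aux_half_trace [CharP F 2] (m : ℕ) (v : F) (hq : v ^ 2 ^ (2 * m + 1) = v)
    (hv : Tr (2 * m + 1) v = 0) : ∃ u : F, u ^ 2 + u = v := by
  refine ⟨∑ i ∈ Finset.range (m + 1), v ^ 2 ^ (2 * i), ?_⟩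
  have key : ∀ k : ℕ, (∑ i ∈ Finset.range k, v ^ 2 ^ (2 * i)) ^ 2
      + ∑ i ∈ Finset.range k, v ^ 2 ^ (2 * i) = ∑ j ∈ Finset.range (2 * k), v ^ 2 ^ j := by
    intro k
    induction k with
    | zero => simp
    | succ k ih =>
      rw [show 2 * (k + 1) = 2 * k + 1 + 1 by ring, Finset.sum_range_succ, Finset.sum_range_succ,
        Finset.sum_range_succ, ← ih, CharTwo.add_sq, ← pow_mul, ← pow_succ]
      ring
  rw [key, show 2 * (m + 1) = (2 * m + 1) + 1 by ring, Finset.sum_range_succ, hq]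
  unfold Tr at hv
  rw [hv, zero_add]

theorem aux_no_omega [CharP F 2] (m : ℕ) (w : F) (hq : w ^ 2 ^ (2 * m + 1) = w) :
    w ^ 2 + w + 1 ≠ 0 := by
  intro h
  have h2 : (2 : F) = 0 := CharTwo.two_eq_zero
  have h4 : w ^ 4 = w := by
    linear_combination (w ^ 2 - w) * h
  have key : ∀ k : ℕ, w ^ 4 ^ k = w := by
    intro k
    induction k with
    | zero => simp
    | succ k ih => rw [pow_succ, pow_mul, ih, h4]
  have h5 : w ^ 2 = w := by
    rw [pow_succ, pow_mul, pow_mul, show 2 ^ 2 = 4 by norm_num, key] at hq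
    exact hq
  have : (1 : F) = 0 := by linear_combination h - h5 - w * h2
  exact one_ne_zero this

theorem aux_quartic [Fintype F] [DecidableEq F] (p q r s t : F) (hp : p ≠ 0) :
    (Finset.univ.filter fun x : F => p * x ^ 4 + q * x ^ 3 + r * x ^ 2 + s * x + t = 0).card
      ≤ 4 := by
  classical
  set P : Polynomial F := Polynomial.C p * Polynomial.X ^ 4 + Polynomial.C q * Polynomial.X ^ 3
    + Polynomial.C r * Polynomial.X ^ 2 + Polynomial.C s * Polynomial.X + Polynomial.C t with hP
  have hdeg : P.natDegree = 4 := by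
    rw [hP]; compute_degree!
  have h0 : P ≠ 0 := by
    intro h; rw [h] at hdeg; simp at hdeg
  calc _ ≤ P.roots.toFinset.card := by
        apply Finset.card_le_card
        intro x hx
        rw [Finset.mem_filter] at hx
        rw [Multiset.mem_toFinset, Polynomial.mem_roots h0]
        simp [hP, hx.2]
    _ ≤ P.roots.card := Multiset.toFinset_card_le _
    _ ≤ P.natDegree := Polynomial.card_roots' _
    _ = 4 := hdeg

/-- Clearing denominators. -/
theorem aux_clear [CharP F 2] (c α b x : F) (hx : x ≠ 0) (hxα : x + α ≠ 0) :
    ((x + α)⁻¹ + (x + α) ^ 2) - c * (x⁻¹ + x ^ 2) = b ↔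
    (1 + c) * x ^ 4 + (1 + c) * α * x ^ 3 + (α ^ 2 + b) * x ^ 2
      + (1 + α ^ 3 + c + b * α) * x + c * α = 0 := by
  have h2 : (2 : F) = 0 := CharTwo.two_eq_zero
  have e : (x * (x + α)) * (((x + α)⁻¹ + (x + α) ^ 2) - c * (x⁻¹ + x ^ 2) - b) =
    (1 + c) * x ^ 4 + (1 + c) * α * x ^ 3 + (α ^ 2 + b) * x ^ 2
      + (1 + α ^ 3 + c + b * α) * x + c * α := by
    have e1 : (x + α) * (x + α)⁻¹ = 1 := mul_inv_cancel₀ hxα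
    have e2 : x * x⁻¹ = 1 := mul_inv_cancel₀ hx
    generalize (x + α)⁻¹ = i at e1
    generalize x⁻¹ = j at e2
    clear hx hxα
    grind
  rw [← e, mul_eq_zero, mul_eq_zero, sub_eq_zero]
  simp [hx, hxα]

theorem aux_upper [Fintype F] [DecidableEq F] [CharP F 2]
    (hω : ∀ w : F, w ^ 2 + w + 1 ≠ 0) (hsq : ∀ x : F, ∃ y, y ^ 2 = x)
    (G : F → F) (hG : ∀ x, G x = x⁻¹ + x ^ 2) (c : F) (hc : c ≠ 1) (α b : F) :
    cddt G c α b ≤ 5 := by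
  have h2 : (2 : F) = 0 := CharTwo.two_eq_zero
  have hc1 : 1 + c ≠ 0 := by
    intro h; apply hc; linear_combination h - h2
  have hadd : ∀ x y : F, x + y = 0 → x = y := fun x y h => by
    linear_combination h - y * h2
  unfold cddt
  set Q := Finset.univ.filter fun x : F => (1 + c) * x ^ 4 + (1 + c) * α * x ^ 3
    + (α ^ 2 + b) * x ^ 2 + (1 + α ^ 3 + c + b * α) * x + c * α = 0 with hQ
  have hQ4 : Q.card ≤ 4 := aux_quartic _ _ _ _ _ hc1
  have hmem : ∀ x, G (x + α) - c * G x = b → x ≠ 0 → x ≠ α → x ∈ Q := by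
    intro x h hx hxa
    rw [hG, hG] at h
    rw [hQ, Finset.mem_filter]
    exact ⟨Finset.mem_univ _, (aux_clear c α b x hx (fun h => hxa (hadd _ _ h))).1 h⟩
  have bound : ∀ z : F, (∀ x, G (x + α) - c * G x = b → x = z ∨ x ∈ Q) →
      (Finset.univ.filter fun x : F => G (x + α) - c * G x = b).card ≤ 5 := by
    intro z hz
    calc _ ≤ (insert z Q).card := by
          apply Finset.card_le_card
          intro x hx
          rw [Finset.mem_filter] at hx
          rw [Finset.mem_insert]
          exact hz x hx.2
      _ ≤ Q.card + 1 := Finset.card_insert_le _ _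
      _ ≤ 5 := by omega
  by_cases h0 : G (0 + α) - c * G 0 = b
  swap
  · apply bound α
    intro x h
    by_cases hx : x = 0
    · subst hx; exact absurd h h0
    · by_cases hxa : x = α
      · exact Or.inl hxa
      · exact Or.inr (hmem x h hx hxa)
  by_cases hα : G (α + α) - c * G α = b
  swap
  · apply bound 0
    intro x h
    by_cases hx : x = 0
    · exact Or.inl hx
    · by_cases hxa : x = α
      · subst hxa; exact absurd h hα
      · exact Or.inr (hmem x h hx hxa)
  by_cases hα0 : α = 0
  · apply bound 0
    intro x h
    by_cases hx : x = 0
    · exact Or.inl hx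
    · exact Or.inr (hmem x h hx (by rw [hα0]; exact hx))
  -- now α = 1, b = 0
  have hG0 : G 0 = 0 := by rw [hG]; simp
  rw [CharTwo.add_self_eq_zero, hG0] at hα
  rw [zero_add, hG0] at h0
  have hGα : G α = 0 := by
    have : (1 + c) * G α = 0 := by linear_combination h0 - hα
    exact (mul_eq_zero.1 this).resolve_left hc1
  have hb : b = 0 := by rw [← h0, hGα]; ring
  have hα1 : α = 1 := by
    rw [hG] at hGα
    have h3 : (α + 1) * (α ^ 2 + α + 1) = 0 := by
      field_simp at hGα
      linear_combination hGα + (α ^ 2 + α) * h2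
    exact hadd _ _ ((mul_eq_zero.1 h3).resolve_right (hω α))
  obtain ⟨d, hd⟩ := hsq c
  have hd1 : 1 + d ≠ 0 := by
    intro h; apply hc; rw [← hd, ← hadd _ _ h]; ring
  calc _ ≤ ({0, 1, d / (1 + d)} : Finset F).card := by
        apply Finset.card_le_card
        intro x hx
        rw [Finset.mem_filter] at hx
        by_cases hx0 : x = 0
        · simp [hx0]
        by_cases hx1 : x = 1
        · simp [hx1]
        have := hmem x hx.2 hx0 (by rw [hα1]; exact hx1)
        rw [hQ, Finset.mem_filter] at this
        have h4 := this.2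
        rw [hα1, hb, ← hd] at h4
        have h5 : (x ^ 2 + x + 1) * (x + d * (x + 1)) ^ 2 = 0 := by
          grind
        have h6 := pow_eq_zero_iff (two_ne_zero) |>.1 ((mul_eq_zero.1 h5).resolve_left (hω x))
        have h7 : x = d / (1 + d) := by
          rw [eq_div_iff hd1]; linear_combination h6 - d * h2
        simp [h7]
    _ ≤ 3 := Finset.card_le_three
    _ ≤ 5 := by norm_num

theorem aux_id1 [CharP F 2] (t x : F) :
    ((t + 1) * x ^ 2 + t ^ 3 * x + t * (t + 1) ^ 3)
      * ((t + 1) * x ^ 2 + (t ^ 2 + t + 1) * x + (t + 1) ^ 3) =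
    (t ^ 2 + 1) * x ^ 4 + (t ^ 2 + 1) ^ 2 * x ^ 3 + (t ^ 3 + t + 1) * x ^ 2
        + t * (t ^ 2 + 1) ^ 2 * x + t * (t ^ 2 + 1) ^ 3 := by
  have h2 : (2 : F) = 0 := CharTwo.two_eq_zero
  grind

theorem aux_id2 [CharP F 2] (t x : F) (hs : t ^ 3 + t + 1 ≠ 0) (ha : t ^ 2 + 1 ≠ 0)
    (h : (t ^ 2 + 1) * x ^ 4 + (t ^ 2 + 1) ^ 2 * x ^ 3 + (t ^ 3 + t + 1) * x ^ 2
        + t * (t ^ 2 + 1) ^ 2 * x + t * (t ^ 2 + 1) ^ 3 = 0) :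
    (1 + (1 + (t ^ 3 + t + 1)⁻¹)) * x ^ 4 + (1 + (1 + (t ^ 3 + t + 1)⁻¹)) * (t ^ 2 + 1) * x ^ 3
      + ((t ^ 2 + 1) ^ 2 + ((t ^ 2 + 1)⁻¹ + (t ^ 2 + 1) ^ 2)) * x ^ 2
      + (1 + (t ^ 2 + 1) ^ 3 + (1 + (t ^ 3 + t + 1)⁻¹)
        + ((t ^ 2 + 1)⁻¹ + (t ^ 2 + 1) ^ 2) * (t ^ 2 + 1)) * x
      + (1 + (t ^ 3 + t + 1)⁻¹) * (t ^ 2 + 1) = 0 := by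
  have h2 : (2 : F) = 0 := CharTwo.two_eq_zero
  obtain ⟨i, hi⟩ : ∃ i, i = (t ^ 3 + t + 1)⁻¹ := ⟨_, rfl⟩
  obtain ⟨j, hj⟩ : ∃ j, j = (t ^ 2 + 1)⁻¹ := ⟨_, rfl⟩
  have hi' : i * (t ^ 3 + t + 1) = 1 := by rw [hi]; exact inv_mul_cancel₀ hs
  have hj' : j * (t ^ 2 + 1) = 1 := by rw [hj]; exact inv_mul_cancel₀ ha
  rw [← hi, ← hj]
  clear hi hj
  apply mul_left_cancel₀ hs
  apply mul_left_cancel₀ ha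
  clear hs ha
  grind

theorem aux_id3 [CharP F 2] (a : F) (t : F)
    (h : (t ^ 2 + 1) * a ^ 4 + (t ^ 2 + 1) ^ 2 * a ^ 3 + (t ^ 3 + t + 1) * a ^ 2
        + t * (t ^ 2 + 1) ^ 2 * a + t * (t ^ 2 + 1) ^ 3 = 0) (ha : a = t ^ 2 + 1) :
    (t ^ 3 + t + 1) * a ^ 2 = 0 := by
  have h2 : (2 : F) = 0 := CharTwo.two_eq_zero
  subst ha
  grind

/-- The roots, with `a = t ^ 2 + 1`, `s = t ^ 3 + t + 1`. -/
theorem aux_lower [Fintype F] [DecidableEq F] [CharP F 2]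
    (hω : ∀ w : F, w ^ 2 + w + 1 ≠ 0)
    (G : F → F) (hG : ∀ x, G x = x⁻¹ + x ^ 2) (t : F) (ht0 : t ≠ 0) (ht1 : t + 1 ≠ 0)
    (hs : t ^ 3 + t + 1 ≠ 0)
    (w z : F) (hw : w ^ 2 + w = (t + 1) ^ 4 / t ^ 5)
    (hz : z ^ 2 + z = (t + 1) ^ 4 / (t ^ 2 + t + 1) ^ 2) :
    5 ≤ cddt G (1 + (t ^ 3 + t + 1)⁻¹) (t ^ 2 + 1) (G (t ^ 2 + 1)) := by
  have h2 : (2 : F) = 0 := CharTwo.two_eq_zero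
  have hadd : ∀ x y : F, x + y = 0 → x = y := fun x y h => by
    linear_combination h - y * h2
  have hωt := hω t
  have ha : t ^ 2 + 1 ≠ 0 := by
    have : t ^ 2 + 1 = (t + 1) ^ 2 := by linear_combination - t * h2
    rw [this]; exact pow_ne_zero _ ht1
  have hG0 : G 0 = 0 := by rw [hG]; simp
  obtain ⟨P, hP⟩ : ∃ P, P = t ^ 3 / (t + 1) := ⟨_, rfl⟩
  obtain ⟨P', hP'⟩ : ∃ P', P' = (t ^ 2 + t + 1) / (t + 1) := ⟨_, rfl⟩
  have hP0 : P ≠ 0 := by rw [hP]; exact div_ne_zero (pow_ne_zero _ ht0) ht1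
  have hP'0 : P' ≠ 0 := by rw [hP']; exact div_ne_zero hωt ht1
  have hPm : P * (t + 1) = t ^ 3 := by rw [hP]; field_simp
  have hPm' : P' * (t + 1) = t ^ 2 + t + 1 := by rw [hP']; field_simp
  have hPP : P + P' = t ^ 2 + 1 := by
    apply mul_right_cancel₀ ht1
    linear_combination hPm + hPm' - 0 * h2
  -- quadratics
  have hq1 : ∀ w : F, w ^ 2 + w = (t + 1) ^ 4 / t ^ 5 →
      (P * w) ^ 2 + P * (P * w) + t * (t + 1) ^ 2 = 0 := by
    intro w hw
    have : (P * w) ^ 2 + P * (P * w) = t * (t + 1) ^ 2 := by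
      have : (P * w) ^ 2 + P * (P * w) = P ^ 2 * (w ^ 2 + w) := by ring
      rw [this, hw, hP]; field_simp
    rw [this]; exact CharTwo.add_self_eq_zero _
  have hq2 : ∀ z : F, z ^ 2 + z = (t + 1) ^ 4 / (t ^ 2 + t + 1) ^ 2 →
      (P' * z) ^ 2 + P' * (P' * z) + (t + 1) ^ 2 = 0 := by
    intro z hz
    have : (P' * z) ^ 2 + P' * (P' * z) = (t + 1) ^ 2 := by
      have : (P' * z) ^ 2 + P' * (P' * z) = P' ^ 2 * (z ^ 2 + z) := by ring
      rw [this, hz, hP', div_pow]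
      generalize t ^ 2 + t + 1 = y at hωt
      field_simp
    rw [this]; exact CharTwo.add_self_eq_zero _
  have hw1 : (w + 1) ^ 2 + (w + 1) = (t + 1) ^ 4 / t ^ 5 := by
    rw [← hw]; linear_combination (w + 1) * h2
  have hz1 : (z + 1) ^ 2 + (z + 1) = (t + 1) ^ 4 / (t ^ 2 + t + 1) ^ 2 := by
    rw [← hz]; linear_combination (z + 1) * h2
  -- no common root
  have hdis : ∀ x : F, x ^ 2 + P * x + t * (t + 1) ^ 2 = 0 →
      x ^ 2 + P' * x + (t + 1) ^ 2 = 0 → False := by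
    intro x h1 h3
    have e1 : (t ^ 2 + 1) * (x + (t + 1)) = 0 := by
      linear_combination h1 - h3 - x * hPP + x * P' * h2 + (t + 1) ^ 2 * h2 - (t + t ^ 2) * h2
    have e2 : x = t + 1 := hadd _ _ ((mul_eq_zero.1 e1).resolve_left ha)
    apply hωt
    rw [e2] at h3
    linear_combination h3 - hPm' - (t + 1) ^ 2 * h2
  -- quartic
  have hsol : ∀ x : F, (x ^ 2 + P * x + t * (t + 1) ^ 2) * (x ^ 2 + P' * x + (t + 1) ^ 2) = 0 →
      x ≠ 0 ∧ G (x + (t ^ 2 + 1)) - (1 + (t ^ 3 + t + 1)⁻¹) * G x = G (t ^ 2 + 1) := by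
    intro x hx
    have hquart : (t ^ 2 + 1) * x ^ 4 + (t ^ 2 + 1) ^ 2 * x ^ 3 + (t ^ 3 + t + 1) * x ^ 2
        + t * (t ^ 2 + 1) ^ 2 * x + t * (t ^ 2 + 1) ^ 3 = 0 := by
      rw [← aux_id1, ← hPm, ← hPm']
      linear_combination (t + 1) ^ 2 * hx
    have hx0 : x ≠ 0 := by
      rintro rfl
      have : t * (t ^ 2 + 1) ^ 3 = 0 := by linear_combination hquart
      simp [ht0, ha] at this
    have hxa : x + (t ^ 2 + 1) ≠ 0 := by
      intro h
      have e := hadd _ _ h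
      have := aux_id3 x t hquart e
      exact hx0 (pow_eq_zero_iff two_ne_zero |>.1 ((mul_eq_zero.1 this).resolve_left hs))
    refine ⟨hx0, ?_⟩
    rw [hG, hG, hG, aux_clear _ _ _ _ hx0 hxa]
    exact aux_id2 t x hs ha hquart
  have r1 := hsol (P * w) (by rw [hq1 w hw, zero_mul])
  have r2 := hsol (P * (w + 1)) (by rw [hq1 _ hw1, zero_mul])
  have r3 := hsol (P' * z) (by rw [hq2 z hz, mul_zero])
  have r4 := hsol (P' * (z + 1)) (by rw [hq2 _ hz1, mul_zero])
  have d12 : P * w ≠ P * (w + 1) := by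
    intro h; apply hP0; linear_combination - h
  have d34 : P' * z ≠ P' * (z + 1) := by
    intro h; apply hP'0; linear_combination - h
  have d13 : P * w ≠ P' * z := by
    intro h; have e := hq1 w hw; rw [h] at e; exact hdis _ e (hq2 z hz)
  have d14 : P * w ≠ P' * (z + 1) := by
    intro h; have e := hq1 w hw; rw [h] at e; exact hdis _ e (hq2 _ hz1)
  have d23 : P * (w + 1) ≠ P' * z := by
    intro h; have e := hq1 _ hw1; rw [h] at e; exact hdis _ e (hq2 z hz)
  have d24 : P * (w + 1) ≠ P' * (z + 1) := by
    intro h; have e := hq1 _ hw1; rw [h] at e; exact hdis _ e (hq2 _ hz1)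
  have hcard : ({0, P * w, P * (w + 1), P' * z, P' * (z + 1)} : Finset F).card = 5 := by
    rw [Finset.card_insert_of_notMem, Finset.card_insert_of_notMem,
      Finset.card_insert_of_notMem, Finset.card_insert_of_notMem, Finset.card_singleton]
    · simpa using d34
    · simp only [Finset.mem_insert, Finset.mem_singleton]; tauto
    · simp only [Finset.mem_insert, Finset.mem_singleton]; tauto
    · simp only [Finset.mem_insert, Finset.mem_singleton]
      have := r1.1.symm
      have := r2.1.symm
      have := r3.1.symm
      have := r4.1.symm
      tauto
  rw [← hcard]
  unfold cddt
  apply Finset.card_le_card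
  intro x hx
  simp only [Finset.mem_insert, Finset.mem_singleton] at hx
  rw [Finset.mem_filter]
  refine ⟨Finset.mem_univ _, ?_⟩
  rcases hx with rfl | rfl | rfl | rfl | rfl
  · rw [zero_add, hG0, mul_zero, sub_zero]
  · exact r1.2
  · exact r2.2
  · exact r3.2
  · exact r4.2

end helpers

theorem exists_c_cdu_eq_five_odd_square
    {F : Type*} [Field F] [Fintype F] [DecidableEq F]
    (n : ℕ) (hn : 5 ≤ n) (hnodd : Odd n)
    (hF : Fintype.card F = 2 ^ n)
    (a : F) (ha0 : a ≠ 0) (ha1 : a ≠ 1) (hs : a ^ 3 + a ^ 2 + 1 ≠ 0)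
    (htr1 : Tr n (a ^ 2 / (a ^ 2 + a + 1)) = 0)
    (htr2 : Tr n (a ^ 4 / (a + 1) ^ 5) = 0)
    (G : F → F) (hG : ∀ x : F, G x = x ^ (2 ^ n - 2) + x ^ 2) :
    ∃ c : F, c ≠ 1 ∧ cdu G c = 5 ∧
      ∀ s : F, s ^ 2 = a ^ 3 + a ^ 2 + 1 → c = 1 + s⁻¹ := by
  obtain ⟨m, rfl⟩ := hnodd
  have : Fact (Nat.Prime 2) := ⟨Nat.prime_two⟩
  have : CharP F 2 := charP_of_card_eq_prime_pow hF
  have h2 : (2 : F) = 0 := CharTwo.two_eq_zero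
  have hadd : ∀ x y : F, x + y = 0 → x = y := fun x y h => by
    linear_combination h - y * h2
  have hq : ∀ x : F, x ^ 2 ^ (2 * m + 1) = x := fun x => by rw [← hF]; exact FiniteField.pow_card x
  have hω : ∀ w : F, w ^ 2 + w + 1 ≠ 0 := fun w => aux_no_omega m w (hq w)
  have hsq : ∀ x : F, ∃ y, y ^ 2 = x := fun x =>
    ⟨x ^ 2 ^ (2 * m), by rw [← pow_mul, ← pow_succ]; exact hq x⟩
  have hinj : ∀ x y : F, x ^ 2 = y ^ 2 → x = y := by
    intro x y h
    apply hadd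
    rw [← pow_eq_zero_iff two_ne_zero, CharTwo.add_sq, h]
    exact CharTwo.add_self_eq_zero _
  have hpow : (4 : ℕ) ≤ 2 ^ (2 * m + 1) := by
    calc 4 = 2 ^ 2 := by norm_num
      _ ≤ _ := Nat.pow_le_pow_right (by norm_num) (by omega)
  have hG' : ∀ x, G x = x⁻¹ + x ^ 2 := by
    intro x
    rw [hG]
    congr 1
    by_cases hx : x = 0
    · have hne : 2 ^ (2 * m + 1) - 2 ≠ 0 := by omega
      rw [hx, zero_pow hne, inv_zero]
    · apply eq_inv_of_mul_eq_one_left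
      have h1 : x ^ (2 ^ (2 * m + 1) - 2) * x * x = 1 * x := by
        rw [← pow_succ, ← pow_succ, show 2 ^ (2 * m + 1) - 2 + 1 + 1 = 2 ^ (2 * m + 1) by omega,
          hq, one_mul]
      exact mul_right_cancel₀ hx h1
  obtain ⟨t, ht⟩ := hsq (a + 1)
  have hta : a = t ^ 2 + 1 := by linear_combination - ht - h2
  have ht0 : t ≠ 0 := by
    rintro rfl; apply ha1; rw [hta]; ring
  have ht1 : t + 1 ≠ 0 := by
    intro h
    apply ha0
    rw [hta, hadd _ _ h]; linear_combination h2
  have hss : (t ^ 3 + t + 1) ^ 2 = a ^ 3 + a ^ 2 + 1 := by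
    rw [hta]; grind
  have hs0 : t ^ 3 + t + 1 ≠ 0 := by
    intro h; apply hs; rw [← hss, h]; ring
  obtain ⟨u, hu⟩ := aux_half_trace m _ (hq _) htr2
  obtain ⟨w, rfl⟩ := hsq u
  obtain ⟨z, hz⟩ := aux_half_trace m _ (hq _) htr1
  have hωt := hω t
  have haω : a ^ 2 + a + 1 = (t ^ 2 + t + 1) ^ 2 := by rw [hta]; grind
  have ha2 : a = (t + 1) ^ 2 := by rw [hta]; linear_combination - t * h2
  have hw' : w ^ 2 + w = (t + 1) ^ 4 / t ^ 5 := by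
    apply hinj
    rw [CharTwo.add_sq, hu, ← ht, ha2]
    rw [div_pow]
    ring
  have hz' : z ^ 2 + z = (t + 1) ^ 4 / (t ^ 2 + t + 1) ^ 2 := by
    rw [hz, haω, ha2]; ring
  have hc : 1 + (t ^ 3 + t + 1)⁻¹ ≠ 1 := by
    intro h
    exact inv_ne_zero hs0 (by linear_combination h)
  refine ⟨1 + (t ^ 3 + t + 1)⁻¹, hc, ?_, ?_⟩
  · apply le_antisymm
    · unfold cdu
      apply Finset.sup_le
      intro p _
      exact aux_upper hω hsq G hG' _ hc _ _
    · refine (aux_lower hω G hG' t ht0 ht1 hs0 w z hw' hz').trans ?_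
      unfold cdu
      exact Finset.le_sup
        (f := fun p : F × F => cddt G (1 + (t ^ 3 + t + 1)⁻¹) p.1 p.2)
        (b := (t ^ 2 + 1, G (t ^ 2 + 1))) (by simp [hs0])
  · intro s hs'
    rw [hinj s (t ^ 3 + t + 1) (by rw [hs', hss])]
end
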